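/- arXiv:1607.07205 — 3 statements merged into one kernel-verified Lean document; each statement's English description precedes it below -/
import Mathlib

section
/- Let R be a commutative principal ideal domain, n ≥ 3, and suppose A = (a_{ij}) ∈ sl_n(R) is a trace-zero matrix in Laffey–Reams form, i.e. a_{ij} = 0 for all j ≥ i+2 and A ≡ a_{11}·1_n modulo the ideal (a_{12}). Then there exists x = (x_1, …, x_{n−1})ᵀ ∈ R^{n−1} with x_{n−1} = a_{11} such that tr(X(x, a_{12})^r · A) = 0 for each r = 1, …, n−1. -/
open Matrix

/-- The matrix `X(x,a)` (`0`-based indices): entry `(i, i+1)` equals `1` for `1 ≤ i ≤ n-2`,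
entry `(i, 0)` equals `x_{i-1}` for `1 ≤ i`, entry `(n-1, 1)` equals `a`, all other entries
zero. -/
def Xmat (n : ℕ) {S : Type*} [CommRing S] (x : Fin (n - 1) → S) (a : S) :
    Matrix (Fin n) (Fin n) S :=
  fun i j =>
    if 1 ≤ (i : ℕ) ∧ (i : ℕ) ≤ n - 2 ∧ (j : ℕ) = (i : ℕ) + 1 then 1
    else if h : (j : ℕ) = 0 ∧ 1 ≤ (i : ℕ) then
      x ⟨(i : ℕ) - 1, by have := i.isLt; omega⟩
    else if (i : ℕ) = n - 1 ∧ (j : ℕ) = 1 then a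
    else 0

/-! The first row of `X = X(x, a)` vanishes, so `tr (X ^ (r + 1) * A)` only involves the lower rows
of `X`, namely `(x | Z)` with `Z` the shift satisfying `Z ^ (n - 1) = a`. When the first row of `A`
is `(c, a, 0, …, 0)` and `B` is its lower right block, the trace becomes
`a * x r + tr (Z ^ (r + 1) * B)`. For `r + 1 < n - 1` the power of `Z` is traceless, so `B ≡ c • 1`
modulo `a` makes the second term divisible by `a` and `x r` can be solved for; for `r + 1 = n - 1`
the second term is `a * tr B = -a * c`, so `x r = c` works. -/

section ZeroFirstRow

variable {S : Type*} [Semiring S] {l m p : ℕ}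

theorem submatrix_succ_mul (M : Matrix (Fin (l + 1)) (Fin (m + 1)) S)
    (N : Matrix (Fin (m + 1)) (Fin (p + 1)) S) :
    (M * N).submatrix Fin.succ Fin.succ =
      vecMulVec (fun i => M (Fin.succ i) 0) (fun j => N 0 (Fin.succ j)) +
        M.submatrix Fin.succ Fin.succ * N.submatrix Fin.succ Fin.succ := by
  ext i j
  simp [mul_apply, vecMulVec_apply, Fin.sum_univ_succ]

theorem submatrix_succ_mul_of_row_zero (M : Matrix (Fin (l + 1)) (Fin (m + 1)) S)
    {N : Matrix (Fin (m + 1)) (Fin (p + 1)) S} (hN : N 0 = 0) :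
    (M * N).submatrix Fin.succ Fin.succ =
      M.submatrix Fin.succ Fin.succ * N.submatrix Fin.succ Fin.succ := by
  rw [submatrix_succ_mul]
  ext i j
  simp [vecMulVec_apply, hN]

theorem mul_row_zero {M : Matrix (Fin (l + 1)) (Fin m) S} (hM : M 0 = 0)
    (N : Matrix (Fin m) (Fin p) S) : (M * N) 0 = 0 := by
  rw [mul_apply_eq_vecMul, hM, zero_vecMul]

theorem submatrix_succ_pow_mul_of_row_zero {X : Matrix (Fin (m + 1)) (Fin (m + 1)) S}
    {N : Matrix (Fin (m + 1)) (Fin (p + 1)) S} (hX : X 0 = 0) (hN : N 0 = 0) (r : ℕ) :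
    (X ^ r * N).submatrix Fin.succ Fin.succ =
      X.submatrix Fin.succ Fin.succ ^ r * N.submatrix Fin.succ Fin.succ := by
  induction r generalizing N with
  | zero => simp
  | succ r ih =>
    rw [pow_succ, Matrix.mul_assoc, ih (mul_row_zero hX N), submatrix_succ_mul_of_row_zero X hN,
      pow_succ, Matrix.mul_assoc]

theorem trace_pow_succ_mul_of_row_zero {X : Matrix (Fin (m + 1)) (Fin (m + 1)) S} (hX : X 0 = 0)
    (A : Matrix (Fin (m + 1)) (Fin (m + 1)) S) (r : ℕ) :
    (X ^ (r + 1) * A).trace =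
      (X.submatrix Fin.succ Fin.succ ^ r * (X * A).submatrix Fin.succ Fin.succ).trace := by
  have hcorner : (X ^ (r + 1) * A) 0 0 = 0 := by
    rw [pow_succ', Matrix.mul_assoc, mul_row_zero hX, Pi.zero_apply]
  rw [← trace_submatrix_succ, hcorner, zero_add, pow_succ, Matrix.mul_assoc,
    submatrix_succ_pow_mul_of_row_zero hX (mul_row_zero hX A)]

end ZeroFirstRow

/-- The `m × m` matrix with ones on the superdiagonal, `a` in the lower left corner, and zeros
elsewhere. It is the lower right block of `Xmat (m + 1) x a`; the corner condition `j + m = i + 1`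
avoids truncated subtraction. -/
def twistedShift (m : ℕ) {S : Type*} [Semiring S] (a : S) : Matrix (Fin m) (Fin m) S :=
  fun i j => if (j : ℕ) = i + 1 then 1 else if (j : ℕ) + m = i + 1 then a else 0

section TwistedShift

variable {S : Type*} [Semiring S] {m : ℕ} (a : S)

theorem twistedShift_mulVec_of_lt (v : Fin m → S) {i : Fin m} (hi : (i : ℕ) + 1 < m) :
    (twistedShift m a *ᵥ v) i = v ⟨i + 1, hi⟩ := by
  have hrow : twistedShift m a i = Pi.single ⟨i + 1, hi⟩ 1 := by
    ext j
    simp only [twistedShift, Pi.single_apply, Fin.ext_iff]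
    grind
  rw [mulVec, hrow, single_one_dotProduct]

theorem twistedShift_mulVec_of_eq (v : Fin m → S) {i : Fin m} (hi : (i : ℕ) + 1 = m) :
    (twistedShift m a *ᵥ v) i = a * v ⟨0, i.pos⟩ := by
  have hrow : twistedShift m a i = Pi.single ⟨0, i.pos⟩ a := by
    ext j
    simp only [twistedShift, Pi.single_apply, Fin.ext_iff]
    grind
  rw [mulVec, hrow, single_dotProduct]

/-- Extending `v` to a sequence on `ℕ` by `v (i + m) = a * v i`, the twisted shift acts as the
ordinary shift. -/
theorem twistedShift_pow_mulVec_apply (v : Fin m → S) (r : ℕ) (i : Fin m) :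
    (twistedShift m a ^ r *ᵥ v) i =
      a ^ ((i + r) / m) * v ⟨(i + r) % m, Nat.mod_lt _ i.pos⟩ := by
  induction r generalizing i with
  | zero => simp [Nat.div_eq_of_lt, Nat.mod_eq_of_lt]
  | succ r ih =>
    rw [pow_succ', ← mulVec_mulVec]
    obtain hi | hi := (Nat.succ_le_of_lt i.isLt).lt_or_eq
    · rw [twistedShift_mulVec_of_lt a _ hi, ih]
      simp only [add_assoc, add_comm 1 r]
    · have hwrap : (i : ℕ) + (r + 1) = r + m := by omega
      rw [twistedShift_mulVec_of_eq a _ hi, ih]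
      simp only [hwrap, zero_add, Nat.add_div_right r i.pos, Nat.add_mod_right, pow_succ',
        mul_assoc]

theorem twistedShift_pow_mulVec_zero (v : Fin m → S) {r : ℕ} (hr : r < m) :
    (twistedShift m a ^ r *ᵥ v) ⟨0, by omega⟩ = v ⟨r, hr⟩ := by
  simp [twistedShift_pow_mulVec_apply, Nat.div_eq_of_lt hr, Nat.mod_eq_of_lt hr]

theorem twistedShift_pow_self : twistedShift m a ^ m = a • (1 : Matrix (Fin m) (Fin m) S) := by
  refine ext_iff_mulVec.mpr fun v => funext fun i => ?_
  simp [twistedShift_pow_mulVec_apply, Nat.add_div_right _ i.pos, Nat.div_eq_of_lt,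
    Nat.mod_eq_of_lt, smul_mulVec]

theorem trace_twistedShift_pow_of_not_dvd {r : ℕ} (hr : ¬m ∣ r) :
    (twistedShift m a ^ r).trace = 0 := by
  refine Finset.sum_eq_zero fun i _ => ?_
  have hne : (⟨(i + r) % m, Nat.mod_lt _ i.pos⟩ : Fin m) ≠ i := fun h =>
    hr (Nat.add_modEq_left_iff.mp
      ((Fin.ext_iff.mp h).trans (Nat.mod_eq_of_lt i.isLt).symm))
  rw [diag_apply, ← col_apply (twistedShift m a ^ r), ← mulVec_single_one,
    twistedShift_pow_mulVec_apply, Pi.single_eq_of_ne hne, mul_zero]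

end TwistedShift

section Xmat

variable {S : Type*} [CommRing S] {m : ℕ} (x : Fin m → S) (a : S)

theorem Xmat_row_zero : Xmat (m + 1) x a 0 = 0 := by
  ext j
  have hj : ¬(0 = m ∧ (j : ℕ) = 1) := by omega
  simp [Xmat, hj]

theorem Xmat_succ_zero (i : Fin m) : Xmat (m + 1) x a i.succ 0 = x i := by
  simp [Xmat]

theorem Xmat_submatrix_succ :
    (Xmat (m + 1) x a).submatrix Fin.succ Fin.succ = twistedShift m a := by
  ext i j
  simp only [submatrix_apply, Xmat, twistedShift, Fin.val_succ]
  grind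

theorem trace_Xmat_pow_succ_mul (A : Matrix (Fin (m + 1)) (Fin (m + 1)) S) (r : ℕ) :
    (Xmat (m + 1) x a ^ (r + 1) * A).trace =
      (twistedShift m a ^ r *ᵥ x) ⬝ᵥ (fun j => A 0 (Fin.succ j)) +
        (twistedShift m a ^ (r + 1) * A.submatrix Fin.succ Fin.succ).trace := by
  rw [trace_pow_succ_mul_of_row_zero (Xmat_row_zero x a), submatrix_succ_mul, Xmat_submatrix_succ,
    Matrix.mul_add, trace_add, mul_vecMulVec, trace_vecMulVec, ← Matrix.mul_assoc, ← pow_succ]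
  simp only [Xmat_succ_zero]

end Xmat

section Divisibility

variable {R : Type*} [CommRing R]

theorem dvd_trace_mul_of_dvd_sub_smul_one {ι : Type*} [Fintype ι] [DecidableEq ι] {a c : R}
    {C B : Matrix ι ι R} (hC : C.trace = 0) (hB : ∀ i j, a ∣ (B - c • (1 : Matrix ι ι R)) i j) :
    a ∣ (C * B).trace := by
  have htrace : (C * B).trace = (C * (B - c • (1 : Matrix ι ι R))).trace := by
    simp [mul_sub, trace_sub, hC]
  rw [htrace]
  exact Finset.dvd_sum fun i _ => Finset.dvd_sum fun j _ => (hB j i).mul_left _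

theorem exists_mul_add_trace_twistedShift_pow_mul_eq_zero {k : ℕ} {a c : R}
    {B : Matrix (Fin (k + 1)) (Fin (k + 1)) R} (htrace : B.trace = -c)
    (hB : ∀ i j, a ∣ (B - c • (1 : Matrix (Fin (k + 1)) (Fin (k + 1)) R)) i j) :
    ∃ x : Fin (k + 1) → R, x (Fin.last k) = c ∧
      ∀ r, a * x r + (twistedShift (k + 1) a ^ (r + 1 : ℕ) * B).trace = 0 := by
  have hdvd (r : Fin k) : a ∣ (twistedShift (k + 1) a ^ (r + 1 : ℕ) * B).trace :=
    dvd_trace_mul_of_dvd_sub_smul_one (trace_twistedShift_pow_of_not_dvd a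
      (Nat.not_dvd_of_pos_of_lt r.val.succ_pos (Nat.succ_lt_succ r.isLt))) hB
  choose y hy using hdvd
  refine ⟨Fin.snoc (-y) c, Fin.snoc_last _ _, Fin.lastCases ?_ fun r => ?_⟩
  · rw [Fin.snoc_last, Fin.val_last, twistedShift_pow_self, smul_one_mul, trace_smul, htrace,
      smul_eq_mul, mul_neg, add_neg_cancel]
  · rw [Fin.snoc_castSucc, Fin.val_castSucc, hy, Pi.neg_apply, mul_neg, neg_add_cancel]

end Divisibility

theorem exists_x_trace_Xmat_pow_mul_eq_zero_general {R : Type*} [CommRing R] {k : ℕ}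
    (A : Matrix (Fin (k + 2)) (Fin (k + 2)) R) (hA : A.trace = 0)
    (hrow : ∀ j : Fin k, A 0 j.succ.succ = 0)
    (hblock : ∀ i j : Fin (k + 1),
      A 0 1 ∣ (A - A 0 0 • (1 : Matrix (Fin (k + 2)) (Fin (k + 2)) R)) i.succ j.succ) :
    ∃ x : Fin (k + 1) → R, x (Fin.last k) = A 0 0 ∧
      ∀ r : ℕ, 1 ≤ r → r ≤ k + 1 → (Xmat (k + 2) x (A 0 1) ^ r * A).trace = 0 := by
  have htrace : (A.submatrix Fin.succ Fin.succ).trace = -A 0 0 :=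
    eq_neg_of_add_eq_zero_right ((trace_submatrix_succ A).trans hA)
  obtain ⟨x, hlast, hx⟩ := exists_mul_add_trace_twistedShift_pow_mul_eq_zero htrace
    fun i j => by simpa [one_apply] using hblock i j
  refine ⟨x, hlast, fun r hr hrk => ?_⟩
  obtain ⟨s, rfl⟩ := Nat.exists_eq_add_of_le' hr
  have hfirst : (fun j : Fin (k + 1) => A 0 j.succ) = Pi.single 0 (A 0 1) :=
    funext (Fin.cases (by simp) fun j => by simp [hrow])
  calc (Xmat (k + 2) x (A 0 1) ^ (s + 1) * A).trace
      = A 0 1 * x ⟨s, hrk⟩ + (twistedShift (k + 1) (A 0 1) ^ (s + 1) *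
          A.submatrix Fin.succ Fin.succ).trace := by
        rw [trace_Xmat_pow_succ_mul, hfirst, dotProduct_single, mul_comm (A 0 1)]
        exact congrArg (· * A 0 1 + _) (twistedShift_pow_mulVec_zero _ x hrk)
    _ = 0 := hx ⟨s, hrk⟩

/-- For a trace-zero matrix `A` in Laffey–Reams form, there is a vector `x` with
`x_{n-1} = a_{11}` such that `tr(X(x, a_{12})^r · A) = 0` for `r = 1, …, n-1`. -/
theorem exists_x_trace_Xmat_pow_mul_eq_zero {R : Type*} [CommRing R] [IsDomain R]
    [IsPrincipalIdealRing R] {n : ℕ} (hn : 3 ≤ n)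
    (A : Matrix (Fin n) (Fin n) R) (hA : A.trace = 0)
    (hLR1 : ∀ i j : Fin n, (i : ℕ) + 2 ≤ (j : ℕ) → A i j = 0)
    (hLR2 : ∀ i j : Fin n,
      (A - A ⟨0, by omega⟩ ⟨0, by omega⟩ • (1 : Matrix (Fin n) (Fin n) R)) i j ∈
        Ideal.span {A ⟨0, by omega⟩ ⟨1, by omega⟩}) :
    ∃ x : Fin (n - 1) → R,
      x ⟨n - 2, by omega⟩ = A ⟨0, by omega⟩ ⟨0, by omega⟩ ∧
      ∀ r : ℕ, 1 ≤ r → r ≤ n - 1 →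
        ((Xmat n x (A ⟨0, by omega⟩ ⟨1, by omega⟩)) ^ r * A).trace = 0 := by
  obtain ⟨k, rfl⟩ := Nat.exists_eq_add_of_le' (show 2 ≤ n by omega)
  exact exists_x_trace_Xmat_pow_mul_eq_zero_general A hA (fun j => hLR1 _ _ (by simp))
    fun i j => Ideal.mem_span_singleton.mp (hLR2 i.succ j.succ)
end

section
/- Let R be a commutative principal ideal domain and A ∈ sl_n(R) a trace-zero matrix with n ≥ 2. Then there exist matrices X ∈ sl_n(R) and Y ∈ M_n(R) such that XY − YX = A, where X can be chosen such that for every maximal ideal p of R, the reduction X mod p is gl_n(R/p)-regular. -/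
open Matrix

/-- The centralizer of a matrix `X` inside all `n × n` matrices, as a submodule. -/
def glCent {R : Type*} [CommRing R] {n : ℕ} (X : Matrix (Fin n) (Fin n) R) :
    Submodule R (Matrix (Fin n) (Fin n) R) where
  carrier := {Y | X * Y = Y * X}
  add_mem' := fun {a b} ha hb => by
    simp only [Set.mem_setOf_eq] at *
    rw [Matrix.mul_add, Matrix.add_mul, ha, hb]
  zero_mem' := by simp
  smul_mem' := fun c a ha => by
    simp only [Set.mem_setOf_eq] at *
    rw [Matrix.mul_smul, Matrix.smul_mul, ha]

/-- The centralizer of a matrix `X` inside the trace-zero `n × n` matrices, as a submodule. -/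
def slCent {R : Type*} [CommRing R] {n : ℕ} (X : Matrix (Fin n) (Fin n) R) :
    Submodule R (Matrix (Fin n) (Fin n) R) where
  carrier := {Y | Y.trace = 0 ∧ X * Y = Y * X}
  add_mem' := fun {a b} ha hb =>
    ⟨by rw [trace_add, ha.1, hb.1, add_zero],
     by rw [Matrix.mul_add, Matrix.add_mul, ha.2, hb.2]⟩
  zero_mem' := ⟨by simp, by simp⟩
  smul_mem' := fun c a ha =>
    ⟨by rw [trace_smul, ha.1, smul_zero],
     by rw [Matrix.mul_smul, Matrix.smul_mul, ha.2]⟩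

/-!
Write `A = g (c + d B)` with `c`, `d` coprime and `B` congruent to a scalar modulo no prime; it is
enough to treat `c + d B`, up to conjugation.

Let `n ≥ 3`, and consider the values `φ B u` at pairs with `φ u = 0`. One that generates a maximal
ideal is a unit, since modulo a prime dividing it `B` would be scalar. Rescaling `φ` to make the
value `1`, the vectors `u` and `B u` extend to a basis, so we may assume that `B` maps the first
basis vector to the second. Now let `C` be the companion matrix of `T ^ (n - 1) - d` and let `X`
have diagonal blocks `0` and `C`, completed by a first row `(0, y)` with last entry `c`. The
equation `[X, Y] = c + d B` is solved blockwise. In the block of `C` the only obstructions are trace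
pairings with powers of `C`, which determine the other entries of `y`; the remaining first-row
equation is solvable because `c` and `d` are coprime. For the same reason `X` has a cyclic vector
modulo every maximal ideal, so that it is regular there.

For `n = 2` the antidiagonal `X` with entries proportional to `A 0 1` and `-A 1 0` works.
-/

section Unimodular

variable {R : Type*} [CommRing R]

lemma exists_eq_mul_isCoprime [IsDomain R] [IsBezout R] (a b : R) :
    ∃ g p q, a = g * p ∧ b = g * q ∧ IsCoprime p q := by
  classical
  let _ := IsBezout.toGCDDomain R
  obtain ⟨p, q, hp, hq, hpq⟩ := extract_gcd a b
  exact ⟨gcd a b, p, q, hp, hq, (gcd_isUnit_iff p q).1 hpq⟩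

lemma exists_eq_smul_unimodular [IsDomain R] [IsBezout R] {ι : Type*} [Fintype ι]
    [Nonempty ι] (u : ι → R) : ∃ (l : R) (v χ : ι → R), u = l • v ∧ χ ⬝ᵥ v = 1 := by
  classical
  let _ := IsBezout.toGCDDomain R
  obtain ⟨_⟩ : Nonempty (NormalizedGCDMonoid R) := inferInstance
  obtain ⟨v, hv, hgcd⟩ := Finset.univ.extract_gcd u Finset.univ_nonempty
  obtain ⟨χ, hχ⟩ := Finset.univ.gcd_eq_sum_mul v
  refine ⟨_, v, χ, funext fun i => hv i (Finset.mem_univ i), ?_⟩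
  rw [dotProduct_comm, dotProduct, ← hχ, hgcd]

variable {V : Type*} [AddCommGroup V] [Module R V]

lemma exists_basis_eq_cons_basis_ker {χ : Module.Dual R V} {u : V} (hu : χ u = 1) {m : ℕ}
    (b : Module.Basis (Fin m) R χ.ker) :
    ∃ b' : Module.Basis (Fin (m + 1)) R V, b' 0 = u ∧ ∀ i : Fin m, b' i.succ = b i := by
  have hli : ∀ (c : R), ∀ x ∈ χ.ker, c • u + x = 0 → c = 0 := fun c x hx h => by
    simpa [hu, LinearMap.mem_ker.1 hx] using congrArg χ h
  have hsp : ∀ z : V, ∃ c : R, z + c • u ∈ χ.ker := fun z =>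
    ⟨-χ z, by simp [hu]⟩
  refine ⟨b.mkFinCons u hli hsp, ?_, fun i => ?_⟩
  · rw [Module.Basis.coe_mkFinCons, Fin.cons_zero]
  · rw [Module.Basis.coe_mkFinCons, Fin.cons_succ, Function.comp_apply]

lemma exists_basis_of_dual_pair [IsDomain R] [IsPrincipalIdealRing R] [Module.Free R V]
    [Module.Finite R V] {k : ℕ} (hV : Module.finrank R V = k + 2) {χ φ : Module.Dual R V} {u w : V}
    (hχu : χ u = 1) (hφu : φ u = 0) (hφw : φ w = 1) :
    ∃ b : Module.Basis (Fin (k + 2)) R V, b 0 = u ∧ b 1 = w := by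
  let χ' : Module.Dual R V := χ - χ w • φ
  have hχ'u : χ' u = 1 := by simp [χ', hχu, hφu]
  have hχ'w : χ' w = 0 := by simp [χ', hφw]
  let φ' : Module.Dual R χ'.ker := φ.domRestrict χ'.ker
  let w' : χ'.ker := ⟨w, hχ'w⟩
  obtain ⟨b₁, hb₁, -⟩ := exists_basis_eq_cons_basis_ker (χ := φ') (u := w') hφw
    (Module.finBasis R φ'.ker)
  obtain ⟨b₂, hb₂, hb₂'⟩ := exists_basis_eq_cons_basis_ker hχ'u b₁
  obtain rfl : Module.finrank R φ'.ker = k := by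
    simpa [hV] using (Module.finrank_eq_card_basis b₂).symm
  exact ⟨b₂, hb₂, by rw [← Fin.succ_zero_eq_one, hb₂', hb₁]⟩

lemma exists_complementary_dual_pair [IsDomain R] [IsPrincipalIdealRing R] {k : ℕ}
    {χ u φ w : Fin (k + 3) → R} (hχu : χ ⬝ᵥ u = 1) (hφu : φ ⬝ᵥ u = 0) (hφw : φ ⬝ᵥ w = 1) :
    ∃ ω w' : Fin (k + 3) → R, ω ⬝ᵥ u = 0 ∧ φ ⬝ᵥ w' = 0 ∧ ω ⬝ᵥ w' = 1 := by
  obtain ⟨b, rfl, rfl⟩ := exists_basis_of_dual_pair (k := k + 1) (Module.finrank_fin_fun R)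
    (χ := dotProductEquiv R _ χ) (φ := dotProductEquiv R _ φ) hχu hφu hφw
  obtain ⟨ω, hω⟩ := (dotProductEquiv R _).surjective (b.coord (Fin.last _))
  have hω' : ∀ v, ω ⬝ᵥ v = b.coord (Fin.last _) v := LinearMap.congr_fun hω
  refine ⟨ω, b (Fin.last _) - (φ ⬝ᵥ b (Fin.last _)) • b 1, ?_, ?_, ?_⟩
  · simp [hω', Fin.ext_iff]
  · simp [hφw]
  · simp [hω', Fin.ext_iff]

end Unimodular

/-- The value `φ B u` at the orthogonal pair `(u, φ)` generates an ideal that is maximal among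
those generated by the values of `B` at orthogonal pairs. -/
structure IsMaximalValue {R ι : Type*} [CommRing R] [Fintype ι] (B : Matrix ι ι R)
    (u φ : ι → R) : Prop where
  orthogonal : φ ⬝ᵥ u = 0
  dvd_of_dvd : ∀ v ψ : ι → R, ψ ⬝ᵥ v = 0 → ψ ⬝ᵥ B *ᵥ v ∣ φ ⬝ᵥ B *ᵥ u →
    φ ⬝ᵥ B *ᵥ u ∣ ψ ⬝ᵥ B *ᵥ v

namespace IsMaximalValue

variable {R ι : Type*} [CommRing R] [Fintype ι] {B : Matrix ι ι R} {u φ : ι → R}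

lemma exists_pair [IsNoetherianRing R] (B : Matrix ι ι R) : ∃ u φ, IsMaximalValue B u φ := by
  let S : Set (Ideal R) := {I | ∃ v ψ : ι → R, ψ ⬝ᵥ v = 0 ∧ I = Ideal.span {ψ ⬝ᵥ B *ᵥ v}}
  obtain ⟨_, ⟨u, φ, horth, rfl⟩, hmax⟩ := set_has_maximal_iff_noetherian.2
    (inferInstance : IsNoetherian R R) S ⟨_, 0, 0, by rw [dotProduct_zero], rfl⟩
  refine ⟨u, φ, horth, fun v ψ hv hdvd => ?_⟩
  by_contra hndvd
  refine hmax _ ⟨v, ψ, hv, rfl⟩ (lt_of_le_not_ge ?_ ?_) <;>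
    rwa [Ideal.span_singleton_le_span_singleton]

lemma transpose (h : IsMaximalValue B u φ) : IsMaximalValue Bᵀ φ u := by
  have key : ∀ v ψ : ι → R, ψ ⬝ᵥ Bᵀ *ᵥ v = v ⬝ᵥ B *ᵥ ψ := fun v ψ => by
    rw [mulVec_transpose, dotProduct_comm, dotProduct_mulVec]
  refine ⟨by rw [dotProduct_comm, h.orthogonal], fun v ψ hv => ?_⟩
  rw [key, key]
  exact h.dvd_of_dvd ψ v (by rw [dotProduct_comm, hv])

lemma of_value_eq (h : IsMaximalValue B u φ) {v ψ : ι → R} (hv : ψ ⬝ᵥ v = 0)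
    (hval : ψ ⬝ᵥ B *ᵥ v = φ ⬝ᵥ B *ᵥ u) : IsMaximalValue B v ψ :=
  ⟨hv, hval ▸ h.dvd_of_dvd⟩

lemma sub_smul_one [DecidableEq ι] (h : IsMaximalValue B u φ) (a : R) :
    IsMaximalValue (B - a • 1) u φ := by
  have key : ∀ v ψ : ι → R, ψ ⬝ᵥ v = 0 → ψ ⬝ᵥ (B - a • 1) *ᵥ v = ψ ⬝ᵥ B *ᵥ v := fun v ψ hv => by
    simp [sub_mulVec, smul_mulVec, hv]
  refine ⟨h.orthogonal, fun v ψ hv => ?_⟩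
  rw [key v ψ hv, key u φ h.orthogonal]
  exact h.dvd_of_dvd v ψ hv

section Divisibility

variable [IsBezout R]

lemma dvd_left (h : IsMaximalValue B u φ) {ψ : ι → R} (hψ : ψ ⬝ᵥ u = 0) :
    φ ⬝ᵥ B *ᵥ u ∣ ψ ⬝ᵥ B *ᵥ u := by
  obtain ⟨x, y, hxy⟩ := IsBezout.gcd_eq_sum (φ ⬝ᵥ B *ᵥ u) (ψ ⬝ᵥ B *ᵥ u)
  have hval : (x • φ + y • ψ) ⬝ᵥ B *ᵥ u = IsBezout.gcd (φ ⬝ᵥ B *ᵥ u) (ψ ⬝ᵥ B *ᵥ u) := by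
    rw [← hxy, add_dotProduct, smul_dotProduct, smul_dotProduct, smul_eq_mul, smul_eq_mul]
  have horth : (x • φ + y • ψ) ⬝ᵥ u = 0 := by simp [add_dotProduct, h.orthogonal, hψ]
  have hdvd := h.dvd_of_dvd u _ horth (hval ▸ IsBezout.gcd_dvd_left _ _)
  exact (hval ▸ hdvd).trans (IsBezout.gcd_dvd_right _ _)

lemma dvd_right (h : IsMaximalValue B u φ) {v : ι → R} (hv : φ ⬝ᵥ v = 0) :
    φ ⬝ᵥ B *ᵥ u ∣ φ ⬝ᵥ B *ᵥ v := by
  have hdvd := h.transpose.dvd_left (ψ := v) (by rwa [dotProduct_comm])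
  rwa [mulVec_transpose, dotProduct_comm u, dotProduct_comm v, ← dotProduct_mulVec,
    ← dotProduct_mulVec] at hdvd

variable [IsDomain R]

lemma exists_dual_of_ne_zero (h : IsMaximalValue B u φ) (h0 : φ ⬝ᵥ B *ᵥ u ≠ 0) :
    ∃ χ : ι → R, χ ⬝ᵥ u = 1 := by
  have : Nonempty ι := not_isEmpty_iff.1 fun _ => h0 (dotProduct_of_isEmpty _ _)
  obtain ⟨l, v, χ, rfl, hχ⟩ := exists_eq_smul_unimodular u
  rw [mulVec_smul, dotProduct_smul, smul_eq_mul] at h0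
  have hv : φ ⬝ᵥ v = 0 := by simpa [left_ne_zero_of_mul h0] using h.orthogonal
  obtain ⟨k, hk⟩ := h.dvd_of_dvd v φ hv (by simp [mulVec_smul])
  rw [mulVec_smul, dotProduct_smul, smul_eq_mul] at hk
  refine ⟨k • χ, mul_left_cancel₀ (right_ne_zero_of_mul h0) ?_⟩
  rw [smul_dotProduct, dotProduct_smul, hχ, smul_eq_mul, smul_eq_mul]
  linear_combination -hk

variable {p : R}

lemma prime_dvd (h : IsMaximalValue B u φ) (hp : Prime p) (hpg : p ∣ φ ⬝ᵥ B *ᵥ u)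
    {v ψ η : ι → R} (hψ : ψ ⬝ᵥ v = 0) (hψB : ψ ⬝ᵥ B *ᵥ v ∣ p * (φ ⬝ᵥ B *ᵥ u))
    (hη : η ⬝ᵥ v = 0) : p ∣ η ⬝ᵥ B *ᵥ v := by
  obtain ⟨x, y, hxy⟩ := IsBezout.gcd_eq_sum (ψ ⬝ᵥ B *ᵥ v) (η ⬝ᵥ B *ᵥ v)
  have hval : (x • ψ + y • η) ⬝ᵥ B *ᵥ v = IsBezout.gcd (ψ ⬝ᵥ B *ᵥ v) (η ⬝ᵥ B *ᵥ v) := by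
    rw [← hxy, add_dotProduct, smul_dotProduct, smul_dotProduct, smul_eq_mul, smul_eq_mul]
  have horth : (x • ψ + y • η) ⬝ᵥ v = 0 := by simp [add_dotProduct, hψ, hη]
  suffices p ∣ (x • ψ + y • η) ⬝ᵥ B *ᵥ v from
    (hval ▸ this).trans (IsBezout.gcd_dvd_right _ _)
  by_contra hndvd
  obtain ⟨k, hk⟩ := (hval ▸ IsBezout.gcd_dvd_left _ _ : _ ∣ ψ ⬝ᵥ B *ᵥ v).trans hψB
  obtain ⟨k', rfl⟩ := (hp.dvd_or_dvd (hk ▸ dvd_mul_right p _)).resolve_left hndvd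
  refine hndvd (hpg.trans (h.dvd_of_dvd v _ horth ⟨k', mul_left_cancel₀ hp.ne_zero ?_⟩))
  rw [hk, mul_left_comm]

lemma prime_dvd_minor (h : IsMaximalValue B u φ) (hp : Prime p) (hpg : p ∣ φ ⬝ᵥ B *ᵥ u)
    {v ψ : ι → R} (hψ : ψ ⬝ᵥ v = 0) (hψB : ψ ⬝ᵥ B *ᵥ v ∣ p * (φ ⬝ᵥ B *ᵥ u)) (ξ η : ι → R) :
    p ∣ ξ ⬝ᵥ v * η ⬝ᵥ B *ᵥ v - η ⬝ᵥ v * ξ ⬝ᵥ B *ᵥ v := by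
  simpa [sub_dotProduct] using h.prime_dvd hp hpg hψ hψB (η := (ξ ⬝ᵥ v) • η - (η ⬝ᵥ v) • ξ)
    (by simp [sub_dotProduct, mul_comm])

variable {χ : ι → R}

lemma prime_dvd_dotProduct_mulVec (h : IsMaximalValue B u φ) (hp : Prime p)
    (hpg : p ∣ φ ⬝ᵥ B *ᵥ u) (hχ : χ ⬝ᵥ u = 1) (hχB : χ ⬝ᵥ B *ᵥ u = 0) (η : ι → R) :
    p ∣ η ⬝ᵥ B *ᵥ u := by
  simpa [hχ, hχB] using h.prime_dvd_minor hp hpg h.orthogonal (dvd_mul_left _ p) χ η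

/-- The pairs `(u + w, φ)` and `(p • u + w, φ)` both have a value dividing `p * φ B u`; comparing
their minors isolates the contribution of `w`. -/
lemma prime_dvd_of_value_eq_zero (h : IsMaximalValue B u φ) (hp : Prime p)
    (hpg : p ∣ φ ⬝ᵥ B *ᵥ u) (hχ : χ ⬝ᵥ u = 1) (hχB : χ ⬝ᵥ B *ᵥ u = 0) {w : ι → R}
    (hw : φ ⬝ᵥ w = 0) (hwB : φ ⬝ᵥ B *ᵥ w = 0) (η : ι → R) : p ∣ η ⬝ᵥ B *ᵥ w := by
  have hu := h.prime_dvd_dotProduct_mulVec hp hpg hχ hχB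
  have hminor : ∀ x, x ∣ p → ∀ η : ι → R,
      p ∣ (x + χ ⬝ᵥ w) * η ⬝ᵥ B *ᵥ w - (x * η ⬝ᵥ u + η ⬝ᵥ w) * χ ⬝ᵥ B *ᵥ w := fun x hx η => by
    have hdvd := h.prime_dvd_minor hp hpg (v := x • u + w) (ψ := φ)
      (by simp [h.orthogonal, hw])
      (by simpa [mulVec_add, mulVec_smul, hwB] using mul_dvd_mul_right hx _) χ η
    simp only [mulVec_add, mulVec_smul, dotProduct_add, dotProduct_smul, smul_eq_mul, hχ, hχB]
      at hdvd
    convert hdvd.sub ((hu η).mul_left ((x + χ ⬝ᵥ w) * x)) using 1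
    ring
  have hlow : ∀ η : ι → R, p ∣ η ⬝ᵥ B *ᵥ w - η ⬝ᵥ u * χ ⬝ᵥ B *ᵥ w := fun η => by
    convert ((hminor 1 (one_dvd p) η).sub (hminor p dvd_rfl η)).add
      (dvd_mul_right p (η ⬝ᵥ B *ᵥ w - η ⬝ᵥ u * χ ⬝ᵥ B *ᵥ w)) using 1
    ring
  have hprod : ∀ η : ι → R, p ∣ (χ ⬝ᵥ w * η ⬝ᵥ u - η ⬝ᵥ w) * χ ⬝ᵥ B *ᵥ w := fun η => by
    convert ((hminor p dvd_rfl η).sub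
      (dvd_mul_right p (η ⬝ᵥ B *ᵥ w - η ⬝ᵥ u * χ ⬝ᵥ B *ᵥ w))).sub
      ((hlow η).mul_left (χ ⬝ᵥ w)) using 1
    ring
  by_cases hχw : p ∣ χ ⬝ᵥ B *ᵥ w
  · exact (dvd_iff_dvd_of_dvd_sub (hlow η)).2 (hχw.mul_left _)
  · have hw_proportional := fun η => (hp.dvd_or_dvd (hprod η)).resolve_right hχw
    have hB := hw_proportional (η ᵥ* B)
    rw [← dotProduct_mulVec, ← dotProduct_mulVec] at hB
    exact (dvd_sub_right ((hu η).mul_left _)).1 hB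

lemma prime_dvd_of_orthogonal (h : IsMaximalValue B u φ) (hp : Prime p)
    (hpg : p ∣ φ ⬝ᵥ B *ᵥ u) (hχ : χ ⬝ᵥ u = 1) (hχB : χ ⬝ᵥ B *ᵥ u = 0) {v : ι → R}
    (hv : φ ⬝ᵥ v = 0) (η : ι → R) : p ∣ η ⬝ᵥ B *ᵥ v := by
  obtain ⟨r, hr⟩ := h.dvd_right hv
  have hw := h.prime_dvd_of_value_eq_zero hp hpg hχ hχB (w := v - r • u)
    (by simp [hv, h.orthogonal]) (by simp [mulVec_sub, mulVec_smul, hr, mul_comm]) η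
  rw [mulVec_sub, mulVec_smul, dotProduct_sub, dotProduct_smul] at hw
  exact (dvd_iff_dvd_of_dvd_sub hw).2
    ((h.prime_dvd_dotProduct_mulVec hp hpg hχ hχB η).mul_left r)

/-- A second maximal pair with the same `u` is available, and the kernels of the two functionals
together span the whole space. -/
lemma prime_dvd_of_dual_pair (h : IsMaximalValue B u φ) (hp : Prime p)
    (hpg : p ∣ φ ⬝ᵥ B *ᵥ u) (hχ : χ ⬝ᵥ u = 1) (hχB : χ ⬝ᵥ B *ᵥ u = 0) {w ω w' : ι → R}
    (hφw : φ ⬝ᵥ w = 1) (hωu : ω ⬝ᵥ u = 0) (hφw' : φ ⬝ᵥ w' = 0) (hωw' : ω ⬝ᵥ w' = 1)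
    (v η : ι → R) : p ∣ η ⬝ᵥ B *ᵥ v := by
  obtain ⟨r, hr⟩ := h.dvd_left hωu
  have h' : IsMaximalValue B u (ω + (1 - r) • φ) :=
    h.of_value_eq (by simp [add_dotProduct, hωu, h.orthogonal]) (by
      simp only [add_dotProduct, smul_dotProduct, smul_eq_mul, hr]
      ring)
  have hval : (ω + (1 - r) • φ) ⬝ᵥ B *ᵥ u = φ ⬝ᵥ B *ᵥ u := by
    simp only [add_dotProduct, smul_dotProduct, smul_eq_mul, hr]
    ring
  let θ : ι → R := w + (r - 1 - ω ⬝ᵥ w) • w'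
  have hφθ : φ ⬝ᵥ θ = 1 := by simp [θ, hφw, hφw']
  have hφ'θ : (ω + (1 - r) • φ) ⬝ᵥ θ = 0 := by
    simp only [add_dotProduct, smul_dotProduct, hφθ]
    simp [θ, hωw']
  have hker := h.prime_dvd_of_orthogonal hp hpg hχ hχB (v := v - (φ ⬝ᵥ v) • θ)
    (by simp [hφθ]) η
  rw [mulVec_sub, mulVec_smul, dotProduct_sub, dotProduct_smul] at hker
  exact (dvd_iff_dvd_of_dvd_sub hker).2
    ((h'.prime_dvd_of_orthogonal hp (hval ▸ hpg) hχ hχB hφ'θ η).mul_left _)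

end Divisibility

lemma exists_scalar_of_prime_dvd [IsDomain R] [IsPrincipalIdealRing R] {k : ℕ}
    {B : Matrix (Fin (k + 3)) (Fin (k + 3)) R} {u φ : Fin (k + 3) → R}
    (h : IsMaximalValue B u φ) (h0 : φ ⬝ᵥ B *ᵥ u ≠ 0) {p : R} (hp : Prime p)
    (hpg : p ∣ φ ⬝ᵥ B *ᵥ u) : ∃ a : R, ∀ i j, p ∣ (B - a • 1) i j := by
  obtain ⟨χ, hχ⟩ := h.exists_dual_of_ne_zero h0
  obtain ⟨w, hw⟩ := h.transpose.exists_dual_of_ne_zero (by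
    rwa [mulVec_transpose, dotProduct_comm, ← dotProduct_mulVec])
  rw [dotProduct_comm] at hw
  obtain ⟨ω, w', hωu, hφw', hωw'⟩ :=
    exists_complementary_dual_pair hχ h.orthogonal hw
  have hval : φ ⬝ᵥ (B - (χ ⬝ᵥ B *ᵥ u) • 1) *ᵥ u = φ ⬝ᵥ B *ᵥ u := by
    simp [sub_mulVec, smul_mulVec, h.orthogonal]
  refine ⟨χ ⬝ᵥ B *ᵥ u, fun i j => ?_⟩
  have hdvd := (h.sub_smul_one (χ ⬝ᵥ B *ᵥ u)).prime_dvd_of_dual_pair hp (hval ▸ hpg) hχ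
    (by simp [sub_mulVec, smul_mulVec, hχ]) hw hωu hφw' hωw' (Pi.single j 1) (Pi.single i 1)
  simpa only [mulVec_single_one, single_one_dotProduct, col_apply] using hdvd

end IsMaximalValue

section NowhereScalar

variable {R ι : Type*} [CommRing R]

/-- A matrix that is nowhere scalar: it is congruent to a scalar matrix modulo `p` only if `p` is
a unit. -/
def IsNowhereScalar [DecidableEq ι] (B : Matrix ι ι R) : Prop :=
  ∀ p s : R, (∀ i j, p ∣ (B - s • 1) i j) → IsUnit p

lemma eq_smul_one_of_orthogonal [Fintype ι] [DecidableEq ι] {B : Matrix ι ι R}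
    (hB : ∀ v ψ : ι → R, ψ ⬝ᵥ v = 0 → ψ ⬝ᵥ B *ᵥ v = 0) (a : ι) : B = B a a • 1 := by
  have hoff : ∀ i j, i ≠ j → B i j = 0 := fun i j hij => by
    simpa using hB (Pi.single j 1) (Pi.single i 1) (by simp [hij])
  have hdiag : ∀ i, i ≠ a → B i i = B a a := fun i hi => by
    have h := hB (Pi.single i 1 + Pi.single a 1) (Pi.single i 1 - Pi.single a 1)
      (by simp [hi, hi.symm])
    simpa [mulVec_add, hoff i a hi, hoff a i hi.symm, add_neg_eq_zero] using h
  ext i j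
  rcases eq_or_ne i j with rfl | hij
  · rcases eq_or_ne i a with rfl | hi
    · simp
    · simp [hdiag i hi]
  · simp [hoff i j hij, hij]

lemma IsNowhereScalar.exists_orthogonal_value_eq_one [IsDomain R] [IsPrincipalIdealRing R] {k : ℕ}
    {B : Matrix (Fin (k + 3)) (Fin (k + 3)) R} (hB : IsNowhereScalar B) :
    ∃ u φ : Fin (k + 3) → R, φ ⬝ᵥ u = 0 ∧ φ ⬝ᵥ B *ᵥ u = 1 := by
  obtain ⟨u, φ, h⟩ := IsMaximalValue.exists_pair B
  have hg0 : φ ⬝ᵥ B *ᵥ u ≠ 0 := fun hg => by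
    have hscalar := eq_smul_one_of_orthogonal
      (fun v ψ hv => zero_dvd_iff.1 (hg ▸ h.dvd_of_dvd v ψ hv (hg ▸ dvd_zero _))) 0
    exact not_isUnit_zero (hB 0 (B 0 0) fun i j => by rw [← hscalar, sub_self, Matrix.zero_apply])
  have hgunit : IsUnit (φ ⬝ᵥ B *ᵥ u) := by
    by_contra hg
    obtain ⟨p, hp, hpg⟩ := WfDvdMonoid.exists_irreducible_factor hg hg0
    obtain ⟨a, ha⟩ := h.exists_scalar_of_prime_dvd hg0 hp.prime hpg
    exact hp.not_isUnit (hB p a ha)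
  obtain ⟨x, hx⟩ := hgunit.exists_left_inv
  exact ⟨u, x • φ, by simp [h.orthogonal], by simpa using hx⟩

lemma isNowhereScalar_single [DecidableEq ι] {i j : ι} (hij : i ≠ j) :
    IsNowhereScalar (Matrix.single i j (1 : R)) := fun p s h =>
  isUnit_of_dvd_one (by simpa [hij] using h i j)

lemma exists_eq_smul_one_add_smul_isNowhereScalar [IsDomain R] [IsBezout R] [Finite ι]
    [DecidableEq ι] [Nontrivial ι] (A : Matrix ι ι R) :
    ∃ (c d : R) (B : Matrix ι ι R), IsNowhereScalar B ∧ A = c • 1 + d • B := by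
  cases nonempty_fintype ι
  obtain ⟨a, b, hab⟩ := exists_pair_ne ι
  obtain ⟨d, v, χ, hv, hχ⟩ := exists_eq_smul_unimodular fun ij : ι × ι => (A - A a a • 1) ij.1 ij.2
  let B : Matrix ι ι R := of fun i j => v (i, j)
  have hA : A - A a a • 1 = d • B := Matrix.ext fun i j => congrFun hv (i, j)
  by_cases hd : d = 0
  · refine ⟨A a a, 0, _, isNowhereScalar_single hab, ?_⟩
    rwa [zero_smul, add_zero, ← sub_eq_zero, ← zero_smul R B, ← hd]
  refine ⟨A a a, d, B, fun p s h => ?_, by rw [← hA, add_sub_cancel]⟩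
  have hBaa : B a a = 0 := by
    simpa [hd] using congrFun (congrFun hA.symm a) a
  have hps : p ∣ s := by simpa [hBaa] using h a a
  have hpB : ∀ i j, p ∣ B i j := fun i j => by
    rw [← sub_add_cancel (B i j) ((s • (1 : Matrix ι ι R)) i j)]
    exact (h i j).add (hps.mul_right _)
  exact isUnit_of_dvd_one (hχ ▸ Finset.dvd_sum fun ij _ => (hpB ij.1 ij.2).mul_left _)

lemma exists_eq_smul_of_trace_eq_zero [IsDomain R] [IsBezout R] [Fintype ι] [DecidableEq ι]
    [Nontrivial ι] {A : Matrix ι ι R} (hA : A.trace = 0) :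
    ∃ (g c d : R) (B : Matrix ι ι R), IsCoprime c d ∧ IsNowhereScalar B ∧
      (c • 1 + d • B).trace = 0 ∧ A = g • (c • 1 + d • B) := by
  obtain ⟨c', d', B, hB, rfl⟩ := exists_eq_smul_one_add_smul_isNowhereScalar A
  obtain ⟨g, c, d, rfl, rfl, hcd⟩ := exists_eq_mul_isCoprime c' d'
  rw [mul_smul, mul_smul, ← smul_add] at hA ⊢
  by_cases hg : g = 0
  · obtain ⟨a, b, hab⟩ := exists_pair_ne ι
    exact ⟨0, 0, 1, _, isCoprime_one_right, isNowhereScalar_single hab,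
      by simp [trace_single_eq_of_ne _ _ _ hab], by rw [hg, zero_smul, zero_smul]⟩
  · refine ⟨g, c, d, B, hcd, hB, ?_, rfl⟩
    rwa [trace_smul, smul_eq_zero_iff_right hg] at hA

end NowhereScalar

section Conjugation

variable {R : Type*} [CommRing R]

lemma trace_eq_of_isConj {ι : Type*} [Fintype ι] [DecidableEq ι] {A A' : Matrix ι ι R}
    (h : IsConj A A') : A.trace = A'.trace := by
  obtain ⟨P, hP⟩ := h
  rw [P.eq_mul_inv_iff_mul_eq.2 hP.eq.symm, trace_units_conj]

lemma isConj_toMatrix_toMatrix {V ι : Type*} [AddCommGroup V] [Module R V] [Fintype ι]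
    [DecidableEq ι] (b b' : Module.Basis ι R V) (f : Module.End R V) :
    IsConj (LinearMap.toMatrix b b f) (LinearMap.toMatrix b' b' f) := by
  refine ⟨⟨b'.toMatrix b, b.toMatrix b', b'.toMatrix_mul_toMatrix_flip b,
    b.toMatrix_mul_toMatrix_flip b'⟩, ?_⟩
  rw [SemiconjBy, basis_toMatrix_mul_linearMap_toMatrix, linearMap_toMatrix_mul_basis_toMatrix]

lemma IsNowhereScalar.exists_isConj_mulVec_single [IsDomain R] [IsPrincipalIdealRing R] {k : ℕ}
    {B : Matrix (Fin (k + 3)) (Fin (k + 3)) R} (hB : IsNowhereScalar B) (c d : R) :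
    ∃ B' : Matrix (Fin (k + 3)) (Fin (k + 3)) R, IsConj (c • 1 + d • B') (c • 1 + d • B) ∧
      B' *ᵥ Pi.single 0 1 = Pi.single 1 1 := by
  obtain ⟨u, φ, hφu, hφBu⟩ := hB.exists_orthogonal_value_eq_one
  obtain ⟨b, hb0, hb1⟩ := exists_basis_of_dual_pair (k := k + 1) (Module.finrank_fin_fun R)
    (χ := dotProductEquiv R _ (φ ᵥ* B)) (φ := dotProductEquiv R _ φ) (u := u) (w := B *ᵥ u)
    ((dotProduct_mulVec _ _ _).symm.trans hφBu) hφu hφBu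
  refine ⟨LinearMap.toMatrix b b (toLin' B), ?_, ?_⟩
  · convert isConj_toMatrix_toMatrix b (Pi.basisFun R _) (toLin' (c • 1 + d • B)) using 1
    · simp
    · rw [LinearMap.toMatrix_eq_toMatrix', LinearMap.toMatrix'_toLin']
  · ext i
    simp [LinearMap.toMatrix_apply, hb0, ← hb1, Pi.single_apply, Finsupp.single_apply, eq_comm]

end Conjugation

section CyclicVector

variable {R ι : Type*} [CommRing R] [Fintype ι]

/-- The matrix `X` has a cyclic vector, that is, a vector in no proper `X`-invariant submodule. -/
def HasCyclicVector (X : Matrix ι ι R) : Prop :=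
  ∃ v : ι → R, ∀ S : Submodule R (ι → R), v ∈ S → (∀ w ∈ S, X *ᵥ w ∈ S) → S = ⊤

lemma HasCyclicVector.of_isConj [DecidableEq ι] {X X' : Matrix ι ι R} (hX : HasCyclicVector X)
    (hconj : IsConj X X') : HasCyclicVector X' := by
  obtain ⟨P, hP⟩ := hconj
  obtain ⟨v, hv⟩ := hX
  refine ⟨P.1 *ᵥ v, fun S hS hstable => ?_⟩
  have htop := hv (S.comap P.1.mulVecLin) hS fun w hw => by
    rw [Submodule.mem_comap, mulVecLin_apply] at hw ⊢
    rw [mulVec_mulVec, hP.eq, ← mulVec_mulVec]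
    exact hstable _ hw
  refine eq_top_iff.2 fun w _ => ?_
  have hw : P⁻¹.1 *ᵥ w ∈ S.comap P.1.mulVecLin := htop ▸ Submodule.mem_top
  rwa [Submodule.mem_comap, mulVecLin_apply, mulVec_mulVec, P.mul_inv, one_mulVec] at hw

/-- Evaluation at a cyclic vector identifies the centralizer with the whole space. -/
lemma HasCyclicVector.finrank_glCent [Nontrivial R] {n : ℕ} {X : Matrix (Fin n) (Fin n) R}
    (hX : HasCyclicVector X) : Module.finrank R (glCent X) = n := by
  obtain ⟨v, hv⟩ := hX
  let f : glCent X →ₗ[R] (Fin n → R) := (mulVecBilin R R).flip v ∘ₗ (glCent X).subtype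
  have hf : ∀ Z : glCent X, f Z = Z.1 *ᵥ v := fun Z => rfl
  have hcomm : ∀ Z : glCent X, X * Z.1 = Z.1 * X := fun Z => Z.2
  have hinj : Function.Injective f := by
    refine LinearMap.ker_eq_bot.1 (LinearMap.ker_eq_bot'.2 fun Z hZ => ?_)
    have hker : Z.1.mulVecLin.ker = ⊤ := hv _ hZ fun w hw => by
      rw [LinearMap.mem_ker, mulVecLin_apply] at hw ⊢
      rw [mulVec_mulVec, ← hcomm, ← mulVec_mulVec, hw, mulVec_zero]
    exact Subtype.ext (toLin'.injective (by
      rw [toLin'_apply', LinearMap.ker_eq_top.1 hker, ZeroMemClass.coe_zero, map_zero]))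
  have hsurj : f.range = ⊤ := by
    refine hv _ ⟨⟨1, show X * 1 = 1 * X by rw [mul_one, one_mul]⟩, one_mulVec v⟩ ?_
    rintro _ ⟨Z, rfl⟩
    refine ⟨⟨X * Z.1, show X * (X * Z.1) = X * Z.1 * X by rw [Matrix.mul_assoc, hcomm]⟩, ?_⟩
    rw [hf, hf, mulVec_mulVec]
  simpa using (LinearEquiv.ofBijective f ⟨hinj, LinearMap.range_eq_top.1 hsurj⟩).finrank_eq

end CyclicVector

/-- The companion matrix of `X ^ (r + 1) - q`. -/
def shiftMatrix {R : Type*} [CommRing R] (r : ℕ) (q : R) : Matrix (Fin (r + 1)) (Fin (r + 1)) R :=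
  of (Fin.cons (Pi.single (Fin.last r) q) fun i => Pi.single i.castSucc 1)

namespace shiftMatrix

variable {R : Type*} [CommRing R] {r : ℕ} (q : R)

lemma map {S : Type*} [CommRing S] (f : R →+* S) (r : ℕ) (q : R) :
    (shiftMatrix r q).map f = shiftMatrix r (f q) := by
  ext i j
  cases i using Fin.cases <;> simp [shiftMatrix, Pi.single_apply, apply_ite f]

lemma mulVec_single_castSucc (i : Fin r) (a : R) :
    shiftMatrix r q *ᵥ Pi.single i.castSucc a = Pi.single i.succ a := by
  ext j
  cases j using Fin.cases <;>
    simp [shiftMatrix, Pi.single_apply, (Fin.succ_ne_zero i).symm, eq_comm]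

lemma mulVec_single_last (a : R) :
    shiftMatrix r q *ᵥ Pi.single (Fin.last r) a = Pi.single 0 (q * a) := by
  ext j
  cases j using Fin.cases with
  | zero => simp [shiftMatrix]
  | succ j => simp [shiftMatrix, (Fin.castSucc_lt_last j).ne]

lemma vecMul_castSucc (x : Fin (r + 1) → R) (i : Fin r) :
    (x ᵥ* shiftMatrix r q) i.castSucc = x i.succ := by
  simpa only [dotProduct_mulVec, dotProduct_single, mul_one] using
    congrArg (x ⬝ᵥ ·) (mulVec_single_castSucc q i 1)

lemma vecMul_last (x : Fin (r + 1) → R) : (x ᵥ* shiftMatrix r q) (Fin.last r) = x 0 * q := by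
  simpa only [dotProduct_mulVec, dotProduct_single, mul_one] using
    congrArg (x ⬝ᵥ ·) (mulVec_single_last (r := r) q 1)

lemma exists_mulVec_single (j : Fin (r + 1)) (a : R) :
    ∃ c : R, shiftMatrix r q *ᵥ Pi.single j a = Pi.single (j + 1) c := by
  cases j using Fin.lastCases with
  | last => exact ⟨q * a, by rw [mulVec_single_last, Fin.last_add_one]⟩
  | cast i => exact ⟨a, by rw [mulVec_single_castSucc, Fin.coeSucc_eq_succ]⟩

lemma exists_pow_mulVec_single (i : ℕ) (j : Fin (r + 1)) (a : R) :
    ∃ c : R, shiftMatrix r q ^ i *ᵥ Pi.single j a = Pi.single (j + Fin.ofNat (r + 1) i) c := by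
  induction i with
  | zero => exact ⟨a, by rw [pow_zero, one_mulVec, Fin.ofNat_zero, add_zero]⟩
  | succ i ih =>
    obtain ⟨c, hc⟩ := ih
    have hindex : Fin.ofNat (r + 1) (i + 1) = Fin.ofNat (r + 1) i + 1 := by
      ext
      simp [Fin.val_add]
    rw [pow_succ', ← mulVec_mulVec, hc, hindex, ← add_assoc]
    exact exists_mulVec_single q _ c

lemma trace_pow {i : ℕ} (hi0 : i ≠ 0) (hir : i ≤ r) : (shiftMatrix r q ^ i).trace = 0 := by
  refine Finset.sum_eq_zero fun j _ => ?_
  obtain ⟨c, hc⟩ := exists_pow_mulVec_single q i j 1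
  have hne : Fin.ofNat (r + 1) i ≠ 0 := fun h => hi0 (by
    simpa [Fin.ext_iff, Nat.mod_eq_of_lt (Nat.lt_succ_of_le hir)] using h)
  have hdiag : (shiftMatrix r q ^ i) j j = (shiftMatrix r q ^ i *ᵥ Pi.single j 1) j := by
    rw [mulVec_single_one, col_apply]
  rw [diag_apply, hdiag, hc, Pi.single_eq_of_ne]
  simpa using hne

lemma pow_succ_mulVec_single_last (i : Fin (r + 1)) :
    shiftMatrix r q ^ (i + 1 : ℕ) *ᵥ Pi.single (Fin.last r) 1 = Pi.single i q := by
  induction i using Fin.induction with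
  | zero => rw [Fin.val_zero, zero_add, pow_one, mulVec_single_last, mul_one]
  | succ i ih =>
    rw [Fin.val_castSucc] at ih
    rw [Fin.val_succ, pow_succ', ← mulVec_mulVec, ih, mulVec_single_castSucc]

lemma single_last_vecMul_pow_rev (i : Fin (r + 1)) :
    Pi.single (Fin.last r) 1 ᵥ* shiftMatrix r q ^ (i.rev : ℕ) = Pi.single i 1 := by
  induction i using Fin.reverseInduction with
  | last => rw [Fin.rev_last, Fin.val_zero, pow_zero, vecMul_one]
  | cast i ih =>
    rw [Fin.rev_castSucc, Fin.val_succ, pow_succ, ← vecMul_vecMul, ← Fin.val_castSucc,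
      ← Fin.rev_succ, ih]
    ext j
    simp [shiftMatrix]

lemma eq_zero_of_trace_pow_mul_eq_zero {M : Matrix (Fin (r + 1)) (Fin (r + 1)) R}
    (hcol : ∀ i j, j ≠ Fin.last r → M i j = 0)
    (htrace : ∀ i ≤ r, (shiftMatrix r q ^ i * M).trace = 0) : M = 0 := by
  have hM : M = vecMulVec (M.col (Fin.last r)) (Pi.single (Fin.last r) 1) := by
    ext i j
    by_cases hj : j = Fin.last r
    · simp [vecMulVec_apply, hj]
    · simp [vecMulVec_apply, hj, hcol]
  have hlast : M.col (Fin.last r) = 0 := funext fun i => by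
    have h := htrace i.rev i.rev.is_le
    rwa [hM, mul_vecMulVec, trace_vecMulVec, dotProduct_comm, dotProduct_mulVec,
      single_last_vecMul_pow_rev, single_one_dotProduct] at h
  rw [hM, hlast, zero_vecMulVec]

/-- Solving `C Y - Y C = N` column by column determines all columns of `Y` from the first one;
the only obstruction sits in the last column, and the trace conditions kill it. -/
lemma exists_commutator_eq {N : Matrix (Fin (r + 1)) (Fin (r + 1)) R}
    (hN : ∀ i ≤ r, (shiftMatrix r q ^ i * N).trace = 0) :
    ∃ Y, shiftMatrix r q * Y - Y * shiftMatrix r q = N := by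
  let C := shiftMatrix r q
  let column : Fin (r + 1) → Fin (r + 1) → R :=
    Fin.induction 0 fun i y => C *ᵥ y - N.col i.castSucc
  have hcolumn : ∀ i : Fin r, column i.succ = C *ᵥ column i.castSucc - N.col i.castSucc :=
    fun i => Fin.induction_succ _ _ i
  let Y : Matrix (Fin (r + 1)) (Fin (r + 1)) R := (of column)ᵀ
  refine ⟨Y, sub_eq_zero.1 (eq_zero_of_trace_pow_mul_eq_zero q (fun i j hj => ?_) fun i hi => ?_)⟩
  · obtain ⟨j, rfl⟩ := Fin.exists_castSucc_eq.2 hj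
    have hCY : (C * Y) i j.castSucc = (C *ᵥ column j.castSucc) i := rfl
    have hYC : (Y * C) i j.castSucc = column j.succ i := vecMul_castSucc q (Y i) j
    rw [Matrix.sub_apply, Matrix.sub_apply, hCY, hYC, hcolumn, Pi.sub_apply, col_apply,
      sub_sub_cancel, sub_self]
  · have hcomm : (C ^ i * (Y * C)).trace = (C ^ i * (C * Y)).trace := by
      rw [← Matrix.mul_assoc, trace_mul_comm, ← Matrix.mul_assoc, ← Matrix.mul_assoc, ← pow_succ',
        pow_succ]
    rw [Matrix.mul_sub, trace_sub, hN i hi, Matrix.mul_sub, trace_sub, hcomm, sub_self, sub_self]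

end shiftMatrix

section Bordered

/-- The block matrix with corner entry `a`, remaining first row `w`, remaining first column `v` and
remaining block `M`. -/
def bordered {R : Type*} {m : ℕ} (a : R) (w v : Fin m → R) (M : Matrix (Fin m) (Fin m) R) :
    Matrix (Fin (m + 1)) (Fin (m + 1)) R :=
  of (Fin.cons (Fin.cons a w) fun i => Fin.cons (v i) (M i))

variable {R : Type*} {m : ℕ}

lemma eq_bordered (B : Matrix (Fin (m + 1)) (Fin (m + 1)) R) :
    B = bordered (B 0 0) (fun j => B 0 j.succ) (fun i => B i.succ 0)
      (B.submatrix Fin.succ Fin.succ) := by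
  ext i j
  cases i using Fin.cases <;> cases j using Fin.cases <;> rfl

lemma bordered_map {S : Type*} (f : R → S) (a : R) (w v : Fin m → R)
    (M : Matrix (Fin m) (Fin m) R) :
    (bordered a w v M).map f = bordered (f a) (f ∘ w) (f ∘ v) (M.map f) := by
  ext i j
  cases i using Fin.cases <;> cases j using Fin.cases <;> rfl

lemma trace_bordered [AddCommMonoid R] (a : R) (w v : Fin m → R) (M : Matrix (Fin m) (Fin m) R) :
    (bordered a w v M).trace = a + M.trace :=
  Fin.sum_univ_succ _

variable [CommRing R]

lemma bordered_sub (a a' : R) (w w' v v' : Fin m → R) (M M' : Matrix (Fin m) (Fin m) R) :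
    bordered a w v M - bordered a' w' v' M' = bordered (a - a') (w - w') (v - v') (M - M') := by
  ext i j
  cases i using Fin.cases <;> cases j using Fin.cases <;> rfl

lemma smul_one_add_smul_bordered (c d a : R) (w v : Fin m → R) (M : Matrix (Fin m) (Fin m) R) :
    c • 1 + d • bordered a w v M = bordered (c + d * a) (d • w) (d • v) (c • 1 + d • M) := by
  ext i j
  cases i using Fin.cases <;> cases j using Fin.cases <;>
    simp [bordered, one_apply, (Fin.succ_ne_zero _).symm]

lemma bordered_mul (a a' : R) (w w' v v' : Fin m → R) (M M' : Matrix (Fin m) (Fin m) R) :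
    bordered a w v M * bordered a' w' v' M' = bordered (a * a' + w ⬝ᵥ v') (a • w' + w ᵥ* M')
      (a' • v + M *ᵥ v') (vecMulVec v w' + M * M') := by
  ext i j
  cases i using Fin.cases <;> cases j using Fin.cases <;>
    simp [bordered, mul_apply, Fin.sum_univ_succ, dotProduct, vecMul, mulVec, vecMulVec_apply,
      mul_comm]

lemma bordered_mulVec_cons (a s : R) (w v x : Fin m → R) (M : Matrix (Fin m) (Fin m) R) :
    bordered a w v M *ᵥ (Fin.cons s x : Fin (m + 1) → R) =
      (Fin.cons (a * s + w ⬝ᵥ x) (s • v + M *ᵥ x) : Fin (m + 1) → R) := by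
  ext i
  cases i using Fin.cases <;>
    simp [bordered, mulVec, dotProduct, Fin.sum_univ_succ, mul_comm]

end Bordered

section CyclicVectorCriteria

variable {R : Type*} [CommRing R]

lemma eq_top_of_cons_mem {m : ℕ} {S : Submodule R (Fin (m + 1) → R)}
    (hzero : (Fin.cons 1 0 : Fin (m + 1) → R) ∈ S)
    (hsucc : ∀ i : Fin m, ∃ a : R, (Fin.cons a (Pi.single i 1) : Fin (m + 1) → R) ∈ S) :
    S = ⊤ := by
  rw [eq_top_iff, ← (Pi.basisFun R (Fin (m + 1))).span_eq, Submodule.span_le, Set.range_subset_iff]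
  intro j
  cases j using Fin.cases with
  | zero =>
    rw [Pi.basisFun_apply, SetLike.mem_coe]
    convert hzero using 1
    ext j
    cases j using Fin.cases <;> simp
  | succ i =>
    obtain ⟨a, ha⟩ := hsucc i
    rw [Pi.basisFun_apply, SetLike.mem_coe]
    convert S.sub_mem ha (S.smul_mem a hzero) using 1
    ext j
    cases j using Fin.cases <;> simp [Pi.single_apply]

lemma hasCyclicVector_bordered_shiftMatrix {r : ℕ} {q s : R} {y : Fin (r + 1) → R}
    (h : IsUnit (y (Fin.last r) - q * s)) :
    HasCyclicVector (bordered 0 y 0 (shiftMatrix r q)) := by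
  refine ⟨Fin.cons s (Pi.single 0 1), fun S hS hstable => ?_⟩
  have hmem : ∀ i : Fin (r + 1), ∃ a : R, (Fin.cons a (Pi.single i 1) : Fin (r + 2) → R) ∈ S := by
    intro i
    induction i using Fin.induction with
    | zero => exact ⟨s, hS⟩
    | succ i ih =>
      obtain ⟨a, ha⟩ := ih
      have hnext := hstable _ ha
      rw [bordered_mulVec_cons, shiftMatrix.mulVec_single_castSucc, smul_zero, zero_add] at hnext
      exact ⟨_, hnext⟩
  refine eq_top_of_cons_mem ?_ hmem
  obtain ⟨a, ha⟩ := hmem (Fin.last r)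
  have hwrap := hstable _ ha
  rw [bordered_mulVec_cons, shiftMatrix.mulVec_single_last] at hwrap
  refine (S.smul_mem_iff_of_isUnit h).1 ?_
  convert S.sub_mem hwrap (S.smul_mem q hS) using 1
  ext j
  cases j using Fin.cases <;> simp [Pi.single_apply]

lemma hasCyclicVector_antidiagonal {y z s t : R} (h : IsUnit (z * s ^ 2 - y * t ^ 2)) :
    HasCyclicVector !![0, y; z, 0] := by
  refine ⟨![s, t], fun S hS hstable => eq_top_iff.2 fun x _ => ?_⟩
  refine (S.smul_mem_iff_of_isUnit h).1 ?_
  convert S.add_mem (S.smul_mem (x 0 * z * s - x 1 * y * t) hS)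
    (S.smul_mem (x 1 * s - x 0 * t) (hstable _ hS)) using 1
  ext i
  fin_cases i <;> simp <;> ring

end CyclicVectorCriteria

/-- `A` is a commutator `[X, Y]` with `X` of trace zero and cyclic modulo every maximal ideal. -/
def IsRegularCommutator {R ι : Type*} [CommRing R] [Fintype ι] (A : Matrix ι ι R) : Prop :=
  ∃ X Y : Matrix ι ι R, X.trace = 0 ∧ X * Y - Y * X = A ∧
    ∀ p : Ideal R, p.IsMaximal → HasCyclicVector (X.map (Ideal.Quotient.mk p))

namespace IsRegularCommutator

variable {R ι : Type*} [CommRing R] [Fintype ι] {A A' : Matrix ι ι R}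

lemma smul (hA : IsRegularCommutator A) (g : R) : IsRegularCommutator (g • A) := by
  obtain ⟨X, Y, hX, hXY, hcyc⟩ := hA
  exact ⟨X, g • Y, hX, by rw [Matrix.mul_smul, Matrix.smul_mul, ← smul_sub, hXY], hcyc⟩

lemma of_isConj [DecidableEq ι] (hA : IsRegularCommutator A) (hconj : IsConj A A') :
    IsRegularCommutator A' := by
  obtain ⟨X, Y, hX, rfl, hcyc⟩ := hA
  obtain ⟨P, hP⟩ := hconj
  let X' := P * X * P⁻¹
  let Y' := P * Y * P⁻¹
  have hPX : SemiconjBy (P : Matrix ι ι R) X X' := Units.mk_semiconjBy P X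
  have hPY : SemiconjBy (P : Matrix ι ι R) Y Y' := Units.mk_semiconjBy P Y
  have hPXY : SemiconjBy (P : Matrix ι ι R) (X * Y - Y * X) (X' * Y' - Y' * X') :=
    (hPX.mul_right hPY).sub_right (hPY.mul_right hPX)
  refine ⟨X', Y', by rw [trace_units_conj, hX], P.mul_left_inj.1 (hPXY.symm.trans hP),
    fun p hp => (hcyc p hp).of_isConj ?_⟩
  exact (Ideal.Quotient.mk p).mapMatrix.toMonoidHom.map_isConj ⟨P, hPX⟩

end IsRegularCommutator

section FirstColumn

variable {R : Type*} [CommRing R]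

lemma smul_one_add_smul_eq_bordered {m : ℕ} {B : Matrix (Fin (m + 2)) (Fin (m + 2)) R}
    (hB : B *ᵥ Pi.single 0 1 = Pi.single 1 1) (c d : R) :
    c • 1 + d • B = bordered c (d • fun j => B 0 j.succ) (Pi.single 0 d)
      (c • 1 + d • B.submatrix Fin.succ Fin.succ) := by
  have hcol : ∀ i, B i 0 = (Pi.single 1 1 : Fin (m + 2) → R) i := fun i => by
    rw [← hB, mulVec_single_one, col_apply]
  have hv : (fun i : Fin (m + 1) => B i.succ 0) = Pi.single 0 1 := funext fun i => by
    simp only [hcol, Pi.single_apply, ← Fin.succ_zero_eq_one, Fin.succ_inj]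
  conv_lhs => rw [eq_bordered B, smul_one_add_smul_bordered, hv, hcol 0]
  simp [← Pi.single_smul]

lemma exists_smul_add_vecMul_shiftMatrix_eq {r : ℕ} {q : R} {y : Fin (r + 1) → R}
    (hy : IsCoprime (y (Fin.last r)) q) (s : Fin (r + 1) → R) :
    ∃ (z : R) (w : Fin (r + 1) → R), z • y + w ᵥ* shiftMatrix r q = s := by
  obtain ⟨a, b, hab⟩ := hy
  let z := s (Fin.last r) * a
  refine ⟨z, Fin.cons (s (Fin.last r) * b) fun i => s i.castSucc - z * y i.castSucc, ?_⟩
  ext j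
  cases j using Fin.lastCases with
  | last =>
    simp only [Pi.add_apply, Pi.smul_apply, smul_eq_mul, shiftMatrix.vecMul_last, Fin.cons_zero, z]
    linear_combination s (Fin.last r) * hab
  | cast j => simp [shiftMatrix.vecMul_castSucc]

lemma exists_commutator_shiftMatrix_eq {r : ℕ} (c d : R)
    (D : Matrix (Fin (r + 1)) (Fin (r + 1)) R) (htr : c + (c • 1 + d • D).trace = 0) :
    ∃ (y : Fin (r + 1) → R) (Y : Matrix (Fin (r + 1)) (Fin (r + 1)) R), y (Fin.last r) = c ∧
      shiftMatrix r d * Y - Y * shiftMatrix r d =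
        c • 1 + d • D + vecMulVec (Pi.single (Fin.last r) 1) y := by
  -- The entry of `y` at `i` is forced by the trace condition on the power `i + 1`.
  let y : Fin (r + 1) → R := Fin.snoc (fun i => -(shiftMatrix r d ^ (i + 1 : ℕ) * D).trace) c
  have hy : y (Fin.last r) = c := Fin.snoc_last _ _
  have htrace : ∀ i ≤ r, (shiftMatrix r d ^ i *
      (c • 1 + d • D + vecMulVec (Pi.single (Fin.last r) 1) y)).trace = 0 := fun i hi => by
    rw [Matrix.mul_add, trace_add, mul_vecMulVec, trace_vecMulVec]
    cases i with
    | zero => rw [pow_zero, Matrix.one_mul, one_mulVec, single_one_dotProduct, hy, add_comm, htr]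
    | succ i =>
      have hyi : y (Fin.castSucc ⟨i, hi⟩) = -(shiftMatrix r d ^ (i + 1) * D).trace :=
        Fin.snoc_castSucc (α := fun _ => R) _ _ ⟨i, hi⟩
      have hlast := shiftMatrix.pow_succ_mulVec_single_last d (Fin.castSucc ⟨i, hi⟩)
      rw [Fin.val_castSucc] at hlast
      rw [hlast, single_dotProduct, hyi, Matrix.mul_add, Matrix.mul_smul, Matrix.mul_smul,
        Matrix.mul_one, trace_add, trace_smul, trace_smul,
        shiftMatrix.trace_pow d i.succ_ne_zero hi, smul_zero, zero_add, smul_eq_mul, mul_neg,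
        add_neg_cancel]
  obtain ⟨Y, hY⟩ := shiftMatrix.exists_commutator_eq d htrace
  exact ⟨y, Y, hy, hY⟩

lemma exists_isUnit_sub_mul {K : Type*} [Field K] {a b : K} (h : IsCoprime a b) :
    ∃ s, IsUnit (a - b * s) := by
  by_cases ha : a = 0
  · refine ⟨-1, ?_⟩
    rw [ha, isCoprime_zero_left] at h
    simpa [ha] using h
  · exact ⟨0, by simpa using ha⟩

lemma isRegularCommutator_of_mulVec_single {k : ℕ} {c d : R} (hcd : IsCoprime c d)
    {B : Matrix (Fin (k + 3)) (Fin (k + 3)) R} (hB : B *ᵥ Pi.single 0 1 = Pi.single 1 1)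
    (htr : (c • 1 + d • B).trace = 0) : IsRegularCommutator (c • 1 + d • B) := by
  rw [smul_one_add_smul_eq_bordered hB] at htr ⊢
  rw [trace_bordered] at htr
  obtain ⟨y, Y, rfl, hY⟩ := exists_commutator_shiftMatrix_eq c d _ htr
  obtain ⟨z, w, hzw⟩ := exists_smul_add_vecMul_shiftMatrix_eq hcd
    (y ᵥ* Y - d • fun j => B 0 j.succ)
  refine ⟨bordered 0 y 0 (shiftMatrix (k + 1) d), bordered z w (Pi.single (Fin.last _) 1) Y,
    ?_, ?_, fun p hp => ?_⟩
  · rw [trace_bordered, zero_add, ← pow_one (shiftMatrix _ _),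
      shiftMatrix.trace_pow d one_ne_zero (by simp)]
  · rw [bordered_mul, bordered_mul, bordered_sub, hzw, shiftMatrix.mulVec_single_last]
    congr 1
    · simp
    · simp
    · simp
    · rw [← sub_eq_iff_eq_add.2 hY]
      simp only [zero_add, zero_vecMulVec]
      abel
  · let _ := Ideal.Quotient.field p
    obtain ⟨s, hs⟩ := exists_isUnit_sub_mul (hcd.map (Ideal.Quotient.mk p))
    have hzero : Ideal.Quotient.mk p ∘ (0 : Fin (k + 2) → R) = 0 := funext fun _ => map_zero _
    rw [bordered_map, shiftMatrix.map, map_zero, hzero]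
    exact hasCyclicVector_bordered_shiftMatrix hs

end FirstColumn

lemma isRegularCommutator_fin_two {R : Type*} [CommRing R] [IsDomain R] [IsBezout R]
    {A : Matrix (Fin 2) (Fin 2) R} (hA : A.trace = 0) : IsRegularCommutator A := by
  obtain ⟨g, y, z, hy, hz, s, t, hst⟩ := exists_eq_mul_isCoprime (A 0 1) (-A 1 0)
  rw [trace_fin_two] at hA
  refine ⟨!![0, y; z, 0], !![0, -(A 0 0 * t); A 0 0 * s, g], (trace_fin_two _).trans (add_zero 0),
    ?_, fun p hp => ?_⟩
  · rw [mul_fin_two, mul_fin_two, ← Matrix.ext_iff, Fin.forall_fin_two, Fin.forall_fin_two,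
      Fin.forall_fin_two]
    simp only [Matrix.sub_apply, of_apply, cons_val_zero, cons_val_one]
    refine ⟨⟨?_, ?_⟩, ?_, ?_⟩
    · linear_combination A 0 0 * hst
    · linear_combination -hy
    · linear_combination hz
    · linear_combination -A 0 0 * hst - hA
  · let _ := Ideal.Quotient.field p
    have hmap : !![0, y; z, 0].map (Ideal.Quotient.mk p) =
        !![0, Ideal.Quotient.mk p y; Ideal.Quotient.mk p z, 0] := by
      ext i j
      fin_cases i <;> fin_cases j <;> simp
    rw [hmap]
    have hyz : IsCoprime y z := ⟨s, t, hst⟩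
    rcases (hyz.map (Ideal.Quotient.mk p)).ne_zero_or_ne_zero with hy0 | hz0
    · exact hasCyclicVector_antidiagonal (s := 0) (t := 1) (by simpa using hy0)
    · exact hasCyclicVector_antidiagonal (s := 1) (t := 0) (by simpa using hz0)

/-- Over a PID `R`, every trace-zero matrix `A` (with `n ≥ 2`) is a commutator `[X, Y]` with
`X` trace zero and `Y` arbitrary, where `X` can be chosen so that its reduction mod every
maximal ideal `p` is `gl_n(R/p)`-regular. -/
theorem trace_zero_is_commutator_glY {R : Type*} [CommRing R] [IsDomain R]
    [IsPrincipalIdealRing R] {n : ℕ} (hn : 2 ≤ n)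
    (A : Matrix (Fin n) (Fin n) R) (hA : A.trace = 0) :
    ∃ X Y : Matrix (Fin n) (Fin n) R,
      X.trace = 0 ∧ X * Y - Y * X = A ∧
      ∀ (p : Ideal R), p.IsMaximal →
        Module.finrank (R ⧸ p) (glCent (X.map (Ideal.Quotient.mk p))) = n := by
  have hcomm : IsRegularCommutator A := by
    obtain ⟨k, rfl⟩ := Nat.exists_eq_add_of_le' hn
    cases k with
    | zero => exact isRegularCommutator_fin_two hA
    | succ k =>
      obtain ⟨g, c, d, B, hcd, hB, htr, rfl⟩ := exists_eq_smul_of_trace_eq_zero hA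
      obtain ⟨B', hconj, hB'⟩ := hB.exists_isConj_mulVec_single c d
      have htr' := (trace_eq_of_isConj hconj).trans htr
      exact ((isRegularCommutator_of_mulVec_single hcd hB' htr').of_isConj hconj).smul g
  obtain ⟨X, Y, hX, hXY, hcyc⟩ := hcomm
  exact ⟨X, Y, hX, hXY, fun p hp => (hcyc p hp).finrank_glCent⟩
end

section
/- Let R be a local principal ideal domain whose residue field k satisfies |k| > 2. Then for every A ∈ SL_2(R) there exist x ∈ GL_2(R) and y ∈ SL_2(R) such that the group commutator x y x⁻¹ y⁻¹ equals A. Moreover, y can be taken to be GL_2(R)-conjugate to a matrix of the form ((0, 1), (−1, s)) for some s ∈ R. -/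
open Matrix

/-!
If `y` and `A y` have the same determinant and trace and each has a cyclic vector, then both are
conjugate to one companion matrix, so `A y = x y x⁻¹` for some invertible `x`, that is,
`A = (x, y)`. It remains to find such a `y` of determinant `1`.

Some entry `η` of `A - 1` divides all the others, so `A = 1 + η B` with an entry of `B` equal to
`1`. If `B` is not scalar modulo the maximal ideal, it is conjugate to a companion matrix; for `A`
in the resulting normal form a suitable `y` can be written down once some unit `q` has `q + η` a
unit too, and this is where the residue field must have more than two elements. Otherwise `A₀₀` and
`B₀₀` are units, and `y = ((p, -1), (1, 0))` has `tr (A y) = tr y` for a suitable `p`.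
-/

theorem exists_isUnit_isUnit_add {R : Type*} [CommRing R] [IsLocalRing R]
    (hk : 2 < Cardinal.mk (IsLocalRing.ResidueField R)) (c : R) :
    ∃ q : R, IsUnit q ∧ IsUnit (q + c) := by
  obtain ⟨z, hz⟩ := Cardinal.exists_notMem_of_length_lt [0, -IsLocalRing.residue R c]
    (by exact_mod_cast hk)
  obtain ⟨q, rfl⟩ := IsLocalRing.residue_surjective z
  simp only [List.mem_cons, List.not_mem_nil, or_false, not_or] at hz
  refine ⟨q, (IsLocalRing.residue_ne_zero_iff_isUnit q).1 hz.1,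
    (IsLocalRing.residue_ne_zero_iff_isUnit _).1 ?_⟩
  rw [map_add]
  exact mt eq_neg_of_add_eq_zero_left hz.2

theorem isConj_one_add_smul {R S : Type*} [CommSemiring R] [Semiring S] [Algebra R S] (r : R)
    {x y : S} (h : IsConj x y) : IsConj (1 + r • x) (1 + r • y) :=
  h.imp fun _ hc ↦ (SemiconjBy.one_right _).add_right (hc.smul_right r)

section Conjugacy

variable {R : Type*} [CommRing R]

theorem isConj_iff_exists_isUnit_det {n : Type*} [Fintype n] [DecidableEq n]
    {M N : Matrix n n R} :
    IsConj M N ↔ ∃ g : Matrix n n R, IsUnit g.det ∧ N = g * M * g⁻¹ := by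
  constructor
  · rintro ⟨c, hc⟩
    refine ⟨c, isUnits_det_units c, ?_⟩
    rw [hc.eq, mul_nonsing_inv_cancel_right _ _ (isUnits_det_units c)]
  · rintro ⟨g, hg, rfl⟩
    exact ⟨g.nonsingInvUnit hg, (nonsing_inv_mul_cancel_right _ (g * M) hg).symm⟩

theorem det_eq_of_isConj {n : Type*} [Fintype n] [DecidableEq n] {M N : Matrix n n R}
    (h : IsConj M N) : M.det = N.det := by
  obtain ⟨g, hg, rfl⟩ := isConj_iff_exists_isUnit_det.1 h
  rw [det_conj ((isUnit_iff_isUnit_det g).2 hg)]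

theorem isConj_companion_of_isUnit_det {M : Matrix (Fin 2) (Fin 2) R} (v : Fin 2 → R)
    (hv : IsUnit (of ![M *ᵥ v, v]).det) : IsConj !![0, 1; -M.det, M.trace] M := by
  -- The columns of `g` are `M v - tr(M) v` and `v`; by Cayley-Hamilton, `M` maps the first of them
  -- to `-det(M) v`.
  let g : Matrix (Fin 2) (Fin 2) R :=
    !![M 0 1 * v 1 - M 1 1 * v 0, v 0; M 1 0 * v 0 - M 0 0 * v 1, v 1]
  have hg : IsUnit g.det := by
    convert hv using 1
    simp only [g, det_fin_two, of_apply, cons_val', cons_val_zero, cons_val_one, cons_val_fin_one,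
      mulVec_fin_two]
    ring
  have hgM : g * !![0, 1; -M.det, M.trace] = M * g := by
    conv_rhs => rw [eta_fin_two M]
    simp only [g, mul_fin_two, det_fin_two, trace_fin_two]
    ring_nf
  exact ⟨nonsingInvUnit g hg, hgM⟩

theorem isConj_companion_of_isUnit_zero_one {M : Matrix (Fin 2) (Fin 2) R} (h : IsUnit (M 0 1)) :
    IsConj !![0, 1; -M.det, M.trace] M :=
  isConj_companion_of_isUnit_det ![0, 1] (by simpa [det_fin_two] using h)

/-- The matrix `M` over a local ring is not congruent to a scalar matrix modulo the maximal ideal.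
This is encoded entrywise: being a unit means being nonzero in the residue field. -/
def IsResiduallyNonscalar (M : Matrix (Fin 2) (Fin 2) R) : Prop :=
  IsUnit (M 0 1) ∨ IsUnit (M 1 0) ∨ IsUnit (M 0 0 - M 1 1)

theorem IsResiduallyNonscalar.isConj_companion [IsLocalRing R] {M : Matrix (Fin 2) (Fin 2) R}
    (hM : IsResiduallyNonscalar M) : IsConj !![0, 1; -M.det, M.trace] M := by
  by_cases h01 : IsUnit (M 0 1)
  · exact isConj_companion_of_isUnit_zero_one h01
  by_cases h10 : IsUnit (M 1 0)
  · exact isConj_companion_of_isUnit_det ![1, 0] (by simpa [det_fin_two] using h10)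
  have hdiag : IsUnit (M 0 0 - M 1 1) := (hM.resolve_left h01).resolve_left h10
  have hoff : ¬ IsUnit (M 1 0 - M 0 1) := by
    rw [sub_eq_add_neg]
    exact IsLocalRing.nonunits_add h10 (mt (IsUnit.neg_iff _).1 h01)
  refine isConj_companion_of_isUnit_det ![1, 1] ?_
  have hdet : (of ![M *ᵥ ![1, 1], ![1, 1]]).det + (M 1 0 - M 0 1) = M 0 0 - M 1 1 := by
    simp only [det_fin_two, of_apply, cons_val', cons_val_zero, cons_val_one, cons_val_fin_one,
      mulVec_fin_two]
    ring
  rw [← hdet] at hdiag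
  exact (IsLocalRing.isUnit_or_isUnit_of_isUnit_add hdiag).resolve_right hoff

theorem isUnit_zero_zero_of_not_isResiduallyNonscalar [IsLocalRing R]
    {M : Matrix (Fin 2) (Fin 2) R} (hM : ¬ IsResiduallyNonscalar M)
    (hunit : ∃ i j, IsUnit (M i j)) : IsUnit (M 0 0) := by
  simp only [IsResiduallyNonscalar, not_or] at hM
  obtain ⟨h01, h10, hdiag⟩ := hM
  have h11 : IsUnit (M 1 1) → IsUnit (M 0 0) := fun h ↦ by
    rw [← sub_sub_self (M 0 0) (M 1 1), sub_eq_add_neg] at h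
    exact (IsLocalRing.isUnit_or_isUnit_of_isUnit_add h).resolve_right
      (mt (IsUnit.neg_iff _).1 hdiag)
  obtain ⟨i, j, hij⟩ := hunit
  fin_cases i <;> fin_cases j
  exacts [hij, absurd hij h01, absurd hij h10, h11 hij]

theorem isUnit_zero_zero_of_isUnit_det [IsLocalRing R] {M : Matrix (Fin 2) (Fin 2) R}
    (hdet : IsUnit M.det) (h10 : ¬ IsUnit (M 1 0)) : IsUnit (M 0 0) := by
  rw [det_fin_two, sub_eq_add_neg] at hdet
  refine isUnit_of_mul_isUnit_left
    ((IsLocalRing.isUnit_or_isUnit_of_isUnit_add hdet).resolve_right fun h ↦ h10 ?_)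
  exact isUnit_of_mul_isUnit_right ((IsUnit.neg_iff _).1 h)

end Conjugacy

section Commutators

variable {R : Type*} [CommRing R]

/-- `A` is a commutator `(x, y)` with `x ∈ GL₂(R)` and `y` conjugate under `GL₂(R)` to a companion
matrix `((0, 1), (-1, s))`. The commutator equation is encoded in the form `x y x⁻¹ = A y`, in which
`x` enters only through the conjugacy of `y` and `A y`. -/
def IsCompanionCommutator (A : Matrix (Fin 2) (Fin 2) R) : Prop :=
  ∃ (y : Matrix (Fin 2) (Fin 2) R) (s : R), IsConj !![0, 1; -1, s] y ∧ IsConj y (A * y)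

variable {A A' : Matrix (Fin 2) (Fin 2) R}

theorem IsCompanionCommutator.of_isConj (h : IsConj A A') (hA : IsCompanionCommutator A) :
    IsCompanionCommutator A' := by
  obtain ⟨c, hc⟩ := h
  obtain ⟨y, s, hys, hyA⟩ := hA
  have hcy := c.mk_semiconjBy y
  have hy : IsConj y _ := ⟨c, hcy⟩
  have hAy : IsConj (A * y) (A' * _) := ⟨c, hc.mul_right hcy⟩
  exact ⟨_, s, hys.trans hy, hy.symm.trans (hyA.trans hAy)⟩

theorem isCompanionCommutator_of_trace_mul_eq {y : Matrix (Fin 2) (Fin 2) R} (hA : A.det = 1)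
    (hy : y.det = 1) (htr : (A * y).trace = y.trace) (hy01 : IsUnit (y 0 1))
    (hAy01 : IsUnit ((A * y) 0 1)) : IsCompanionCommutator A := by
  have hconj := isConj_companion_of_isUnit_zero_one hy01
  have hconjA := isConj_companion_of_isUnit_zero_one hAy01
  rw [htr, det_mul, hA, one_mul] at hconjA
  exact ⟨y, y.trace, hy ▸ hconj, hconj.symm.trans hconjA⟩

theorem isCompanionCommutator_of_sub_one_dvd (hA : A.det = 1) (h00 : IsUnit (A 0 0))
    (hdvd : A 0 0 - 1 ∣ A 1 0 - A 0 1) : IsCompanionCommutator A := by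
  obtain ⟨p, hp⟩ := hdvd
  refine isCompanionCommutator_of_trace_mul_eq (y := !![p, -1; 1, 0]) hA (by simp) ?_ (by simp) ?_
  · rw [eta_fin_two A, mul_fin_two, trace_fin_two_of, trace_fin_two_of]
    linear_combination -hp
  · simpa [Matrix.mul_apply] using h00

theorem isCompanionCommutator_one_add_smul_companion {η δ τ q : R}
    (hdet : (1 + η • !![0, 1; -δ, τ]).det = 1) (hq : IsUnit q) (hqη : IsUnit (q + η)) :
    IsCompanionCommutator (1 + η • !![0, 1; -δ, τ]) := by
  have hentries : 1 + η • !![0, 1; -δ, τ] = !![1, η; -(η * δ), 1 + η * τ] := by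
    simp [one_fin_two]
  rw [hentries] at hdet ⊢
  have hτ : η * τ = -(η ^ 2 * δ) := by
    rw [det_fin_two_of] at hdet
    linear_combination hdet
  -- Once `y₀₁ = q` and `y₁₁ = 1`, the condition `tr (A y) = tr y` follows from
  -- `y₁₀ = δ (q + η)`, and `det y = 1` then determines `y₀₀`.
  refine isCompanionCommutator_of_trace_mul_eq
    (y := !![1 + δ * q * (q + η), q; δ * (q + η), 1]) hdet ?_ ?_ (by simpa using hq) ?_
  · rw [det_fin_two_of]
    ring
  · rw [mul_fin_two, trace_fin_two_of, trace_fin_two_of]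
    linear_combination hτ
  · simpa using hqη

theorem isCompanionCommutator_one_add_smul [IsLocalRing R]
    (hk : 2 < Cardinal.mk (IsLocalRing.ResidueField R)) {η : R} {B : Matrix (Fin 2) (Fin 2) R}
    (hdet : (1 + η • B).det = 1) (hB : ∃ i j, IsUnit (B i j)) :
    IsCompanionCommutator (1 + η • B) := by
  by_cases hnonscalar : IsResiduallyNonscalar B
  · have hconj := isConj_one_add_smul η hnonscalar.isConj_companion
    obtain ⟨q, hq, hqη⟩ := exists_isUnit_isUnit_add hk η
    refine (isCompanionCommutator_one_add_smul_companion ?_ hq hqη).of_isConj hconj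
    rw [det_eq_of_isConj hconj, hdet]
  · have hB00 := isUnit_zero_zero_of_not_isResiduallyNonscalar hnonscalar hB
    have h10 : ¬ IsUnit ((1 + η • B) 1 0) := fun h ↦
      hnonscalar (.inr (.inl (isUnit_of_mul_isUnit_right (by simpa using h))))
    have h00 := isUnit_zero_zero_of_isUnit_det (hdet ▸ isUnit_one) h10
    refine isCompanionCommutator_of_sub_one_dvd hdet h00 ?_
    simpa [← mul_sub] using mul_dvd_mul_left η hB00.dvd

end Commutators

theorem exists_forall_apply_dvd {R ι : Type*} [Monoid R] [PreValuationRing R] [Finite ι]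
    [Nonempty ι] (f : ι → R) : ∃ i, ∀ j, f i ∣ f j := by
  have hdir : Directed (fun a b ↦ b ∣ a) f := fun i j ↦
    (ValuationRing.dvd_total (f i) (f j)).elim (fun h ↦ ⟨i, dvd_rfl, h⟩) fun h ↦ ⟨j, h, dvd_rfl⟩
  exact hdir.finite_le id

theorem exists_eq_smul_apply_eq_one {R m n : Type*} [Monoid R] [PreValuationRing R]
    [Finite m] [Finite n] [Nonempty m] [Nonempty n] (N : Matrix m n R) :
    ∃ (η : R) (B : Matrix m n R), N = η • B ∧ ∃ i j, B i j = 1 := by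
  classical
  obtain ⟨⟨i, j⟩, hdvd⟩ := exists_forall_apply_dvd fun p : m × n ↦ N p.1 p.2
  choose B hB using hdvd
  refine ⟨N i j, of fun k l ↦ Function.update B (i, j) 1 (k, l), ?_, i, j, by simp⟩
  ext k l
  by_cases hkl : (k, l) = (i, j)
  · obtain ⟨rfl, rfl⟩ := Prod.mk.inj hkl
    simp
  · simpa [Function.update_of_ne hkl] using hB (k, l)

theorem SL2_commutator_GL2_local_PID_general {R : Type*} [CommRing R] [Nontrivial R]
    [PreValuationRing R] (hk : 2 < Cardinal.mk (IsLocalRing.ResidueField R))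
    (A : Matrix (Fin 2) (Fin 2) R) (hA : A.det = 1) :
    ∃ x y : Matrix (Fin 2) (Fin 2) R,
      IsUnit x.det ∧ y.det = 1 ∧ x * y * x⁻¹ * y⁻¹ = A ∧
      ∃ (g : Matrix (Fin 2) (Fin 2) R) (s : R),
        IsUnit g.det ∧ y = g * !![0, 1; -1, s] * g⁻¹ := by
  obtain ⟨η, B, hAB, i, j, hij⟩ := exists_eq_smul_apply_eq_one (A - 1)
  obtain rfl : A = 1 + η • B := by rw [← hAB, add_sub_cancel]
  obtain ⟨y, s, hsy, hyA⟩ := isCompanionCommutator_one_add_smul hk hA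
    ⟨i, j, hij ▸ isUnit_one⟩
  obtain ⟨g, hg, hgy⟩ := isConj_iff_exists_isUnit_det.1 hsy
  obtain ⟨x, hx, hxy⟩ := isConj_iff_exists_isUnit_det.1 hyA
  have hy : y.det = 1 := by simp [← det_eq_of_isConj hsy]
  refine ⟨x, y, hx, hy, ?_, g, s, hg, hgy⟩
  rw [← hxy, mul_nonsing_inv_cancel_right _ _ (hy ▸ isUnit_one)]

/-- Over a local PID `R` whose residue field has more than `2` elements, every `A ∈ SL_2(R)`
is a group commutator `x y x⁻¹ y⁻¹` with `x ∈ GL_2(R)` and `y ∈ SL_2(R)`, where `y` can be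
taken `GL_2(R)`-conjugate to a matrix `((0, 1), (-1, s))`. -/
theorem SL2_commutator_GL2_local_PID {R : Type*} [CommRing R] [IsDomain R]
    [IsPrincipalIdealRing R] [IsLocalRing R]
    (hk : 2 < Cardinal.mk (IsLocalRing.ResidueField R))
    (A : Matrix (Fin 2) (Fin 2) R) (hA : A.det = 1) :
    ∃ x y : Matrix (Fin 2) (Fin 2) R,
      IsUnit x.det ∧ y.det = 1 ∧ x * y * x⁻¹ * y⁻¹ = A ∧
      ∃ (g : Matrix (Fin 2) (Fin 2) R) (s : R),
        IsUnit g.det ∧ y = g * !![0, 1; -1, s] * g⁻¹ := by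
  have : ValuationRing R := ValuationRing.iff_local_bezout_domain.2 ⟨‹_›, inferInstance⟩
  exact SL2_commutator_GL2_local_PID_general hk A hA
end
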